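/- Let u be a pair potential that is locally stable with constant B ≥ 0 and regular, let Λ ⊂ ℝ^d be bounded and measurable, and assume Ξ_Λ(z) ≠ 0 for all |z| < z₀. Let z ∈ ℝ with 0 < z < z₀, let k ≥ 0 and y_1,…,y_k ∈ Λ be such that θ_Λ^{(k)}(z; y_1,…,y_k) ≠ 0 (with θ_Λ^{(0)} := 1). Then for every n ≥ 1 and all x_1,…,x_n ∈ Λ, | θ_Λ^{(n+k)}(z; x_1,…,x_n, y_1,…,y_k) / θ_Λ^{(k)}(z; y_1,…,y_k) | ≤ z^n e^{2βBn}. -/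

import Mathlib

open MeasureTheory Bornology

noncomputable section

/-- Boltzmann factor `e^{-β t}` with the convention `e^{-β(+∞)} = 0`. -/
def boltz (β : ℝ) (t : EReal) : ℝ :=
  if t = ⊤ then 0 else Real.exp (-β * t.toReal)

/-- Hamiltonian of a pair potential: `H(x₁,…,xₙ) = ∑_{i<j} u(xᵢ - xⱼ)`. -/
def Ham {d : ℕ} (u : (Fin d → ℝ) → EReal) (n : ℕ) (x : Fin n → (Fin d → ℝ)) : EReal :=
  ∑ p ∈ Finset.univ.filter (fun p : Fin n × Fin n => p.1 < p.2), u (x p.1 - x p.2)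

/-- A pair potential: even, measurable, bounded from below. -/
def IsPairPotential {d : ℕ} (u : (Fin d → ℝ) → EReal) : Prop :=
  Measurable u ∧ (∀ x, u (-x) = u x) ∧ ∃ m : ℝ, ∀ x, (m : EReal) ≤ u x

/-- Stability with constant `B`: `H(x₁,…,xₙ) ≥ -Bn`. -/
def IsStable {d : ℕ} (u : (Fin d → ℝ) → EReal) (B : ℝ) : Prop :=
  ∀ (n : ℕ) (x : Fin n → (Fin d → ℝ)), ((-(B * n) : ℝ) : EReal) ≤ Ham u n x

/-- Mayer function `f_β = e^{-βu} - 1`. -/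
def mayer {d : ℕ} (β : ℝ) (u : (Fin d → ℝ) → EReal) (x : Fin d → ℝ) : ℝ :=
  boltz β (u x) - 1

/-- Regularity: the Mayer function is integrable. -/
def IsRegularPP {d : ℕ} (β : ℝ) (u : (Fin d → ℝ) → EReal) : Prop :=
  Integrable (mayer β u)

/-- `C_β(u) = ∫ |e^{-βu} - 1|`. -/
def Creg {d : ℕ} (β : ℝ) (u : (Fin d → ℝ) → EReal) : ℝ :=
  ∫ x, |mayer β u x|

/-- The cartesian power `Λ^k`. -/
def cube {d : ℕ} (Λ : Set (Fin d → ℝ)) (k : ℕ) : Set (Fin k → (Fin d → ℝ)) :=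
  Set.univ.pi fun _ => Λ

/-- Grand canonical partition function `Ξ_Λ(z)`. -/
def Xi {d : ℕ} (β : ℝ) (u : (Fin d → ℝ) → EReal) (Λ : Set (Fin d → ℝ)) (z : ℂ) : ℂ :=
  ∑' k : ℕ, z ^ k / (Nat.factorial k : ℂ) *
    ((∫ y in cube Λ k, boltz β (Ham u k y) : ℝ) : ℂ)

/-- `θ_Λ^{(n)}(z; x₁,…,xₙ)`. -/
def theta {d : ℕ} (β : ℝ) (u : (Fin d → ℝ) → EReal) (Λ : Set (Fin d → ℝ)) (n : ℕ)
    (z : ℂ) (x : Fin n → (Fin d → ℝ)) : ℂ :=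
  (Xi β u Λ z)⁻¹ * ∑' k : ℕ, z ^ (n + k) / (Nat.factorial k : ℂ) *
    ((∫ y in cube Λ k, boltz β (Ham u (n + k) (Fin.append x y)) : ℝ) : ℂ)

end

/-- Local stability with constant `B`: `Σ_i u(x_i - x) ≥ -2B` for all finite
configurations and all points `x`. -/
def IsLocallyStable {d : ℕ} (u : (Fin d → ℝ) → EReal) (B : ℝ) : Prop :=
  ∀ (n : ℕ) (x : Fin n → (Fin d → ℝ)) (y : Fin d → ℝ), 1 ≤ n →
    ((-(2 * B) : ℝ) : EReal) ≤ ∑ i, u (x i - y)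

/-!
Split the energy of a configuration `(x, y, w)` into the energy of `(y, w)` and, for each `xᵢ`, its
interaction with all the points listed after it. By local stability each of these `n` interactions
is at least `-2B`, so prepending `x` multiplies every Boltzmann weight by at most `e^{2βBn}`. For
`z ≥ 0` all terms of the series defining `θ` are nonnegative, so this factor, together with `zⁿ`,
passes to the sums; the common normalisation `Ξ_Λ(z)` cancels in the quotient.
-/

section Boltzmann

variable {β : ℝ}

lemma boltz_nonneg (β : ℝ) (t : EReal) : 0 ≤ boltz β t := by
  unfold boltz
  split_ifs <;> positivity

lemma measurable_boltz (β : ℝ) : Measurable (boltz β) :=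
  Measurable.ite (measurableSet_singleton _) measurable_const
    (Real.measurable_exp.comp (measurable_ereal_toReal.const_mul _))

lemma boltz_add_le (hβ : 0 ≤ β) {c : ℝ} {s t : EReal} (hs : ((-c : ℝ) : EReal) ≤ s)
    (ht : t ≠ ⊥) : boltz β (s + t) ≤ Real.exp (β * c) * boltz β t := by
  have rhs_nonneg := mul_nonneg (Real.exp_nonneg (β * c)) (boltz_nonneg β t)
  induction s with
  | bot => simp at hs
  | top => simpa [EReal.top_add_of_ne_bot ht, boltz] using rhs_nonneg
  | coe s =>
    induction t with
    | bot => exact absurd rfl ht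
    | top => simp [boltz]
    | coe t =>
      have hcs : -c ≤ s := EReal.coe_le_coe_iff.1 hs
      simp only [boltz, ← EReal.coe_add, EReal.coe_ne_top, if_false, EReal.toReal_coe,
        ← Real.exp_add, Real.exp_le_exp]
      linarith [mul_le_mul_of_nonneg_left hcs hβ]

lemma boltz_le_exp (hβ : 0 ≤ β) {c : ℝ} {t : EReal} (ht : ((-c : ℝ) : EReal) ≤ t) :
    boltz β t ≤ Real.exp (β * c) := by
  simpa [boltz] using boltz_add_le hβ ht EReal.zero_ne_bot

end Boltzmann

section Hamiltonian

variable {d : ℕ} {u : (Fin d → ℝ) → EReal}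

lemma Ham_eq_sum_Ioi (u : (Fin d → ℝ) → EReal) (n : ℕ) (x : Fin n → (Fin d → ℝ)) :
    Ham u n x = ∑ i, ∑ j ∈ Finset.Ioi i, u (x i - x j) := by
  rw [Ham, Finset.sum_finset_product _ Finset.univ Finset.Ioi (by simp)]

lemma Ham_comp_cast {m n : ℕ} (h : m = n) (u : (Fin d → ℝ) → EReal)
    (x : Fin n → (Fin d → ℝ)) : Ham u m (x ∘ Fin.cast h) = Ham u n x := by
  subst h
  rfl

lemma Ham_append (u : (Fin d → ℝ) → EReal) {n m : ℕ} (x : Fin n → (Fin d → ℝ))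
    (y : Fin m → (Fin d → ℝ)) :
    Ham u (n + m) (Fin.append x y) =
      ∑ i, ∑ j ∈ Finset.Ioi (Fin.castAdd m i), u (x i - Fin.append x y j) + Ham u m y := by
  simp [Ham_eq_sum_Ioi, Fin.sum_univ_add, ← Fin.map_natAddEmb_Ioi]

-- `EReal` addition is discontinuous at `(⊤, ⊥)` and `(⊥, ⊤)`, but lower semicontinuous everywhere.
instance instMeasurableAdd₂EReal : MeasurableAdd₂ EReal :=
  ⟨EReal.lowerSemicontinuous_add.measurable⟩

lemma measurable_Ham (hu : Measurable u) (n : ℕ) : Measurable (Ham u n) :=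
  Finset.measurable_sum _ fun p _ =>
    hu.comp ((measurable_pi_apply p.1).sub (measurable_pi_apply p.2))

end Hamiltonian

section LocalStability

variable {d : ℕ} {u : (Fin d → ℝ) → EReal} {β B : ℝ}

lemma IsLocallyStable.neg_le_sum {ι : Type*} (hls : IsLocallyStable u B) (hB : 0 ≤ B)
    (heven : ∀ x, u (-x) = u x) (a : Fin d → ℝ) (s : Finset ι) (x : ι → (Fin d → ℝ)) :
    ((-(2 * B) : ℝ) : EReal) ≤ ∑ i ∈ s, u (a - x i) := by
  rcases s.eq_empty_or_nonempty with rfl | hs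
  · rw [Finset.sum_empty, EReal.coe_nonpos]
    linarith
  · calc ((-(2 * B) : ℝ) : EReal)
      _ ≤ ∑ i : Fin s.card, u (x (s.equivFin.symm i) - a) :=
          hls s.card (fun i => x (s.equivFin.symm i)) a hs.card_pos
      _ = ∑ i : s, u (x i - a) := Equiv.sum_comp s.equivFin.symm fun i : s => u (x i - a)
      _ = ∑ i ∈ s, u (x i - a) := Finset.sum_coe_sort s fun i => u (x i - a)
      _ = ∑ i ∈ s, u (a - x i) := by simp only [← heven (_ - a), neg_sub]

lemma IsLocallyStable.neg_le_sum_sum {ι : Type*} {n : ℕ} (hls : IsLocallyStable u B)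
    (hB : 0 ≤ B) (heven : ∀ x, u (-x) = u x) (a : Fin n → (Fin d → ℝ)) (s : Fin n → Finset ι)
    (x : ι → (Fin d → ℝ)) :
    ((-(2 * B * n) : ℝ) : EReal) ≤ ∑ i, ∑ j ∈ s i, u (a i - x j) := by
  calc ((-(2 * B * n) : ℝ) : EReal)
    _ = ∑ _i : Fin n, ((-(2 * B) : ℝ) : EReal) := by
        rw [Finset.sum_const, Finset.card_fin, ← EReal.coe_nsmul, nsmul_eq_mul]
        ring_nf
    _ ≤ ∑ i, ∑ j ∈ s i, u (a i - x j) :=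
        Finset.sum_le_sum fun i _ => hls.neg_le_sum hB heven (a i) (s i) x

lemma IsLocallyStable.neg_le_Ham (hls : IsLocallyStable u B) (hB : 0 ≤ B)
    (heven : ∀ x, u (-x) = u x) (n : ℕ) (x : Fin n → (Fin d → ℝ)) :
    ((-(2 * B * n) : ℝ) : EReal) ≤ Ham u n x := by
  rw [Ham_eq_sum_Ioi]
  exact hls.neg_le_sum_sum hB heven x Finset.Ioi x

lemma IsLocallyStable.boltz_Ham_le (hls : IsLocallyStable u B) (hβ : 0 ≤ β) (hB : 0 ≤ B)
    (heven : ∀ x, u (-x) = u x) (n : ℕ) (x : Fin n → (Fin d → ℝ)) :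
    boltz β (Ham u n x) ≤ Real.exp (2 * β * B * n) := by
  convert boltz_le_exp hβ (hls.neg_le_Ham hB heven n x) using 2
  ring

lemma IsLocallyStable.norm_boltz_Ham_le (hls : IsLocallyStable u B) (hβ : 0 ≤ β) (hB : 0 ≤ B)
    (heven : ∀ x, u (-x) = u x) (n : ℕ) (x : Fin n → (Fin d → ℝ)) :
    ‖boltz β (Ham u n x)‖ ≤ Real.exp (2 * β * B * n) := by
  rw [Real.norm_of_nonneg (boltz_nonneg _ _)]
  exact hls.boltz_Ham_le hβ hB heven n x

lemma IsLocallyStable.boltz_Ham_append_le (hls : IsLocallyStable u B) (hβ : 0 ≤ β) (hB : 0 ≤ B)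
    (heven : ∀ x, u (-x) = u x) {n m : ℕ} (x : Fin n → (Fin d → ℝ))
    (y : Fin m → (Fin d → ℝ)) :
    boltz β (Ham u (n + m) (Fin.append x y)) ≤
      Real.exp (2 * β * B * n) * boltz β (Ham u m y) := by
  have Ham_ne_bot : Ham u m y ≠ ⊥ :=
    ((EReal.bot_lt_coe _).trans_le (hls.neg_le_Ham hB heven m y)).ne'
  have hint := hls.neg_le_sum_sum hB heven x (fun i => Finset.Ioi (Fin.castAdd m i))
    (Fin.append x y)
  rw [Ham_append]
  convert boltz_add_le hβ hint Ham_ne_bot using 3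
  ring

end LocalStability

section Correlation

/-- The configuration integral `∫_{Λ^j} e^{-βH(x₁,…,xₙ,w₁,…,w_j)} dw` of `j` particles in `Λ` in the
presence of fixed particles at `x₁,…,xₙ`. -/
noncomputable def configIntegral {d n : ℕ} (β : ℝ) (u : (Fin d → ℝ) → EReal)
    (Λ : Set (Fin d → ℝ)) (x : Fin n → (Fin d → ℝ)) (j : ℕ) : ℝ :=
  ∫ w in cube Λ j, boltz β (Ham u (n + j) (Fin.append x w))

/-- The unnormalised correlation function `Ξ_Λ(z) θ_Λ^{(n)}(z; x₁,…,xₙ)`, for a real activity `z`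
and as a real number. -/
noncomputable def unnormalizedTheta {d n : ℕ} (β : ℝ) (u : (Fin d → ℝ) → EReal)
    (Λ : Set (Fin d → ℝ)) (z : ℝ) (x : Fin n → (Fin d → ℝ)) : ℝ :=
  ∑' j : ℕ, z ^ (n + j) / (Nat.factorial j : ℝ) * configIntegral β u Λ x j

variable {d : ℕ} {u : (Fin d → ℝ) → EReal} {β B z : ℝ} {Λ : Set (Fin d → ℝ)}

lemma theta_eq_inv_Xi_mul (β : ℝ) (u : (Fin d → ℝ) → EReal) (Λ : Set (Fin d → ℝ)) (z : ℝ)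
    {n : ℕ} (x : Fin n → (Fin d → ℝ)) :
    theta β u Λ n z x = (Xi β u Λ z)⁻¹ * unnormalizedTheta β u Λ z x := by
  simp [theta, unnormalizedTheta, configIntegral, Complex.ofReal_tsum]

lemma configIntegral_nonneg (β : ℝ) (u : (Fin d → ℝ) → EReal) (Λ : Set (Fin d → ℝ)) {n : ℕ}
    (x : Fin n → (Fin d → ℝ)) (j : ℕ) : 0 ≤ configIntegral β u Λ x j :=
  integral_nonneg fun _ => boltz_nonneg _ _

lemma unnormalizedTheta_nonneg (β : ℝ) (u : (Fin d → ℝ) → EReal) (Λ : Set (Fin d → ℝ))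
    (hz : 0 ≤ z) {n : ℕ} (x : Fin n → (Fin d → ℝ)) : 0 ≤ unnormalizedTheta β u Λ z x :=
  tsum_nonneg fun j => mul_nonneg (by positivity) (configIntegral_nonneg β u Λ x j)

lemma volume_cube (Λ : Set (Fin d → ℝ)) (j : ℕ) : volume (cube Λ j) = volume Λ ^ j := by
  simp [cube, volume_pi_pi]

lemma volume_cube_lt_top (hΛ : volume Λ ≠ ⊤) (j : ℕ) : volume (cube Λ j) < ⊤ := by
  rw [volume_cube]
  exact ENNReal.pow_lt_top hΛ.lt_top

lemma measurable_append {α : Type*} [MeasurableSpace α] {n : ℕ} (x : Fin n → α) (j : ℕ) :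
    Measurable (Fin.append x : (Fin j → α) → Fin (n + j) → α) := by
  refine measurable_pi_lambda _ fun i => ?_
  induction i using Fin.addCases with
  | left i => simpa only [Fin.append_left] using measurable_const
  | right i => simpa only [Fin.append_right] using measurable_pi_apply i

lemma IsLocallyStable.integrableOn_boltz_Ham_append (hls : IsLocallyStable u B) (hβ : 0 ≤ β)
    (hB : 0 ≤ B) (hmeas : Measurable u) (heven : ∀ x, u (-x) = u x) (hΛ : volume Λ ≠ ⊤) {n : ℕ}
    (x : Fin n → (Fin d → ℝ)) (j : ℕ) :
    IntegrableOn (fun w => boltz β (Ham u (n + j) (Fin.append x w))) (cube Λ j) :=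
  have hF : Measurable fun w => boltz β (Ham u (n + j) (Fin.append x w)) :=
    (measurable_boltz β).comp ((measurable_Ham hmeas _).comp (measurable_append x j))
  .of_bound (volume_cube_lt_top hΛ j) hF.aestronglyMeasurable _
    (.of_forall fun _ => hls.norm_boltz_Ham_le hβ hB heven _ _)

lemma IsLocallyStable.configIntegral_le (hls : IsLocallyStable u B) (hβ : 0 ≤ β) (hB : 0 ≤ B)
    (heven : ∀ x, u (-x) = u x) (hΛ : volume Λ ≠ ⊤) {n : ℕ} (x : Fin n → (Fin d → ℝ)) (j : ℕ) :
    configIntegral β u Λ x j ≤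
      Real.exp (2 * β * B * (n + j : ℕ)) * (volume Λ).toReal ^ j := by
  have h := norm_setIntegral_le_of_norm_le_const (volume_cube_lt_top hΛ j)
    fun w _ => hls.norm_boltz_Ham_le hβ hB heven (n + j) (Fin.append x w)
  rw [Measure.real, volume_cube, ENNReal.toReal_pow] at h
  exact (Real.le_norm_self _).trans h

lemma IsLocallyStable.summable_configIntegral (hls : IsLocallyStable u B) (hβ : 0 ≤ β)
    (hB : 0 ≤ B) (heven : ∀ x, u (-x) = u x) (hΛ : volume Λ ≠ ⊤) (z : ℝ) {n : ℕ}
    (x : Fin n → (Fin d → ℝ)) :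
    Summable fun j : ℕ => z ^ (n + j) / (Nat.factorial j : ℝ) * configIntegral β u Λ x j := by
  set V := (volume Λ).toReal
  have hmajorant := (Real.summable_pow_div_factorial
    (|z| * Real.exp (2 * β * B) * V)).mul_left (|z| ^ n * Real.exp (2 * β * B * n))
  refine hmajorant.of_norm_bounded fun j => ?_
  have hexp : Real.exp (2 * β * B * (n + j : ℕ)) =
      Real.exp (2 * β * B * n) * Real.exp (2 * β * B) ^ j := by
    rw [← Real.exp_nat_mul, ← Real.exp_add]
    push_cast
    ring_nf
  calc ‖z ^ (n + j) / (Nat.factorial j : ℝ) * configIntegral β u Λ x j‖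
    _ = |z| ^ (n + j) / (Nat.factorial j : ℝ) * configIntegral β u Λ x j := by
        rw [norm_mul, Real.norm_of_nonneg (configIntegral_nonneg β u Λ x j)]
        simp
    _ ≤ |z| ^ (n + j) / (Nat.factorial j : ℝ) * (Real.exp (2 * β * B * (n + j : ℕ)) * V ^ j) := by
        gcongr
        exact hls.configIntegral_le hβ hB heven hΛ x j
    _ = |z| ^ n * Real.exp (2 * β * B * n) *
          ((|z| * Real.exp (2 * β * B) * V) ^ j / (Nat.factorial j : ℝ)) := by
        rw [hexp]
        ring

lemma IsLocallyStable.configIntegral_append_le (hls : IsLocallyStable u B) (hβ : 0 ≤ β)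
    (hB : 0 ≤ B) (hmeas : Measurable u) (heven : ∀ x, u (-x) = u x) (hΛ : volume Λ ≠ ⊤)
    {n k : ℕ} (x : Fin n → (Fin d → ℝ)) (y : Fin k → (Fin d → ℝ)) (j : ℕ) :
    configIntegral β u Λ (Fin.append x y) j ≤
      Real.exp (2 * β * B * n) * configIntegral β u Λ y j := by
  simp only [configIntegral]
  rw [← integral_const_mul]
  refine integral_mono (hls.integrableOn_boltz_Ham_append hβ hB hmeas heven hΛ _ j)
    ((hls.integrableOn_boltz_Ham_append hβ hB hmeas heven hΛ y j).const_mul _) fun w => ?_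
  simp only [Fin.append_assoc, Ham_comp_cast]
  exact hls.boltz_Ham_append_le hβ hB heven x (Fin.append y w)

lemma IsLocallyStable.unnormalizedTheta_append_le (hls : IsLocallyStable u B) (hβ : 0 ≤ β)
    (hB : 0 ≤ B) (hmeas : Measurable u) (heven : ∀ x, u (-x) = u x) (hΛ : volume Λ ≠ ⊤)
    (hz : 0 ≤ z) {n k : ℕ} (x : Fin n → (Fin d → ℝ)) (y : Fin k → (Fin d → ℝ)) :
    unnormalizedTheta β u Λ z (Fin.append x y) ≤
      z ^ n * Real.exp (2 * β * B * n) * unnormalizedTheta β u Λ z y := by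
  rw [unnormalizedTheta, unnormalizedTheta, ← tsum_mul_left]
  refine Summable.tsum_le_tsum (fun j => ?_)
    (hls.summable_configIntegral hβ hB heven hΛ z _)
    ((hls.summable_configIntegral hβ hB heven hΛ z y).mul_left _)
  calc z ^ (n + k + j) / (Nat.factorial j : ℝ) * configIntegral β u Λ (Fin.append x y) j
    _ ≤ z ^ (n + k + j) / (Nat.factorial j : ℝ) *
          (Real.exp (2 * β * B * n) * configIntegral β u Λ y j) := by
        gcongr
        exact hls.configIntegral_append_le hβ hB hmeas heven hΛ x y j
    _ = z ^ n * Real.exp (2 * β * B * n) *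
          (z ^ (k + j) / (Nat.factorial j : ℝ) * configIntegral β u Λ y j) := by
        ring

lemma norm_theta (β : ℝ) (u : (Fin d → ℝ) → EReal) (Λ : Set (Fin d → ℝ)) (hz : 0 ≤ z) {n : ℕ}
    (x : Fin n → (Fin d → ℝ)) :
    ‖theta β u Λ n z x‖ = ‖(Xi β u Λ z)⁻¹‖ * unnormalizedTheta β u Λ z x := by
  rw [theta_eq_inv_Xi_mul, norm_mul, Complex.norm_real,
    Real.norm_of_nonneg (unnormalizedTheta_nonneg β u Λ hz x)]

end Correlation

theorem statement13_general {d : ℕ} {β B : ℝ} (hβ : 0 ≤ β) (hB : 0 ≤ B)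
    {u : (Fin d → ℝ) → EReal} (hu : IsPairPotential u) (hls : IsLocallyStable u B)
    {Λ : Set (Fin d → ℝ)} (hΛ : volume Λ ≠ ⊤) {z : ℝ} (hz : 0 ≤ z)
    {k : ℕ} {y : Fin k → (Fin d → ℝ)} (hθk : theta β u Λ k (z : ℂ) y ≠ 0)
    {n : ℕ} (x : Fin n → (Fin d → ℝ)) :
    ‖theta β u Λ (n + k) (z : ℂ) (Fin.append x y) / theta β u Λ k (z : ℂ) y‖
      ≤ z ^ n * Real.exp (2 * β * B * n) := by
  obtain ⟨hmeas, heven, -⟩ := hu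
  rw [norm_div, div_le_iff₀ (norm_pos_iff.2 hθk), norm_theta β u Λ hz, norm_theta β u Λ hz]
  calc ‖(Xi β u Λ z)⁻¹‖ * unnormalizedTheta β u Λ z (Fin.append x y)
    _ ≤ ‖(Xi β u Λ z)⁻¹‖ *
          (z ^ n * Real.exp (2 * β * B * n) * unnormalizedTheta β u Λ z y) := by
        gcongr
        exact hls.unnormalizedTheta_append_le hβ hB hmeas heven hΛ hz x y
    _ = z ^ n * Real.exp (2 * β * B * n) *
          (‖(Xi β u Λ z)⁻¹‖ * unnormalizedTheta β u Λ z y) := by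
        ring

/-- for a locally stable and regular pair potential and real
`0 < z < z₀`, whenever `θ_Λ^{(k)}(z;y) ≠ 0` (with `θ_Λ^{(0)} := 1`, i.e. `k = 0`
allowed via the empty tuple) one has
`|θ_Λ^{(n+k)}(z;x,y)/θ_Λ^{(k)}(z;y)| ≤ zⁿ e^{2βBn}`. -/
theorem statement13 {d : ℕ} (hd : 1 ≤ d) (β B : ℝ) (hβ : 0 < β) (hB : 0 ≤ B)
    (u : (Fin d → ℝ) → EReal) (hu : IsPairPotential u)
    (hls : IsLocallyStable u B) (hreg : IsRegularPP β u)
    (Λ : Set (Fin d → ℝ)) (hΛb : IsBounded Λ) (hΛm : MeasurableSet Λ)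
    (hXi : ∀ w : ℂ, ‖w‖ * (Real.exp (2 * β * B + 1) * Creg β u) < 1 →
      Xi β u Λ w ≠ 0)
    (z : ℝ) (hz0 : 0 < z) (hz : z * (Real.exp (2 * β * B + 1) * Creg β u) < 1)
    (k : ℕ) (y : Fin k → (Fin d → ℝ)) (hy : ∀ j, y j ∈ Λ)
    (hθk : theta β u Λ k (z : ℂ) y ≠ 0)
    (n : ℕ) (hn : 1 ≤ n) (x : Fin n → (Fin d → ℝ)) (hx : ∀ i, x i ∈ Λ) :
    ‖theta β u Λ (n + k) (z : ℂ) (Fin.append x y) / theta β u Λ k (z : ℂ) y‖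
      ≤ z ^ n * Real.exp (2 * β * B * n) := by
  exact statement13_general hβ.le hB hu hls hΛb.measure_lt_top.ne hz0.le hθk x
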